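/- arXiv:1906.10494 — 2 statements merged into one kernel-verified Lean document; each statement's English description precedes it below -/
import Mathlib

section
/- There exists a polynomial q with natural-number coefficients such that the following holds: let V be a 2-VASS with n control states and norm M, let K ∈ ℕ, and let ρ be a run of V such that for some fixed coordinate j ∈ {1,2}, the j-th coordinate of the vector of every configuration in ρ is smaller than K, and such that ‖trg(ρ)‖ > ‖src(ρ)‖ + K·n·M. Then some configuration in ρ enables a cycle whose effect is vertical or horizontal and whose length is at most q(K·n·M). -/
/-- Integer vectors in the plane. -/
abbrev Vec2 : Type := ℤ × ℤ

/-- The norm of a vector: the maximum of the absolute values of its coordinates. -/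
def vnorm (v : Vec2) : ℕ := max v.1.natAbs v.2.natAbs

/-- A vector is positive if both coordinates are positive. -/
def Pos (v : Vec2) : Prop := 0 < v.1 ∧ 0 < v.2

/-- A vector is semi-positive if both coordinates are nonnegative and one is positive. -/
def SemiPos (v : Vec2) : Prop := 0 ≤ v.1 ∧ 0 ≤ v.2 ∧ (0 < v.1 ∨ 0 < v.2)

/-- A vector is vertical if it is of the form (0, a) with a > 0. -/
def Vert (v : Vec2) : Prop := v.1 = 0 ∧ 0 < v.2

/-- A vector is horizontal if it is of the form (a, 0) with a > 0. -/
def Horiz (v : Vec2) : Prop := 0 < v.1 ∧ v.2 = 0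

/-- Embedding of integer vectors into the rational plane. -/
def toQ (v : Vec2) : ℚ × ℚ := ((v.1 : ℚ), (v.2 : ℚ))

/-- The half-line (ray) ℚ≥0 · x generated by a rational vector x. -/
def rayQ (x : ℚ × ℚ) : Set (ℚ × ℚ) := {z | ∃ a : ℚ, 0 ≤ a ∧ z = a • x}

/-- The cone of a finite list of integer vectors: all nonnegative rational
linear combinations. -/
def Cone (vs : List Vec2) : Set (ℚ × ℚ) :=
  {x | ∃ a : Fin vs.length → ℚ, (∀ i, 0 ≤ a i) ∧ x = ∑ i, a i • toQ (vs.get i)}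

/-- The sequential cone: nonnegative rational combinations all of whose
partial sums are in the nonnegative orthant. -/
def SeqCone (vs : List Vec2) : Set (ℚ × ℚ) :=
  {x | ∃ a : Fin vs.length → ℚ, (∀ i, 0 ≤ a i) ∧
    (∀ k : ℕ, k ≤ vs.length →
      0 ≤ ∑ i : Fin vs.length, if (i : ℕ) < k then a i • toQ (vs.get i) else 0) ∧
    x = ∑ i, a i • toQ (vs.get i)}

/-- Two integer vectors are colinear if they generate the same half-line. -/
def Colinear (v w : Vec2) : Prop := rayQ (toQ v) = rayQ (toQ w)

/-- The clockwise relation on nonnegative vectors: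
`Clk v u` iff u lies strictly clockwise from v. -/
def Clk (v u : Vec2) : Prop := 0 < v.2 * u.1 - v.1 * u.2

/-- Projection of a vector on coordinate `j` (`Fin 2` indexes the two coordinates). -/
def proj (j : Fin 2) (v : Vec2) : ℤ := if j = 0 then v.1 else v.2

/-! ### 2-dimensional vector addition systems with states (2-VASS) -/

/-- A transition of a 2-VASS with control states `Fin n`:
a source state, an effect vector, and a target state. -/
abbrev Transition (n : ℕ) : Type := Fin n × Vec2 × Fin n

/-- A 2-VASS with control states `Fin n` is a finite set of transitions. -/
abbrev VASS (n : ℕ) : Type := Finset (Transition n)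

/-- The norm of a 2-VASS: the largest norm of an effect of a transition. -/
def vassNorm {n : ℕ} (V : VASS n) : ℕ := V.sup (fun t => vnorm t.2.1)

/-- The effect of a sequence of transitions: the sum of the individual effects. -/
def effect {n : ℕ} (π : List (Transition n)) : Vec2 := (π.map (fun t => t.2.1)).sum

/-- A path of `V`: a sequence of transitions of `V` in which
consecutive control states match. -/
def IsPath {n : ℕ} (V : VASS n) (π : List (Transition n)) : Prop :=
  (∀ t ∈ π, t ∈ V) ∧ π.Chain' (fun s t => s.2.2 = t.1)

/-- The path `π` starts at control state `q` (vacuously true for the empty path). -/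
def startsAt {n : ℕ} (π : List (Transition n)) (q : Fin n) : Prop :=
  ∀ t ∈ π.head?, t.1 = q

/-- The control state after the first `i` transitions of `π`, for a path
starting at control state `q`. -/
def stateAt {n : ℕ} (π : List (Transition n)) (q : Fin n) (i : ℕ) : Fin n :=
  (((π.take i).getLast?).map (fun t => t.2.2)).getD q

/-- The final control state of a path `π` starting at control state `q`. -/
def endState {n : ℕ} (π : List (Transition n)) (q : Fin n) : Fin n := stateAt π q π.length

/-- The counter values after the first `i` transitions of `π`, starting from
counter values `u`. -/
def vecAt {n : ℕ} (π : List (Transition n)) (u : Vec2) (i : ℕ) : Vec2 :=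
  u + effect (π.take i)

/-- The path `π` is enabled in the configuration `(q, u)`: it starts at `q`
and all intermediate counter values are nonnegative. -/
def Enabled {n : ℕ} (π : List (Transition n)) (q : Fin n) (u : Vec2) : Prop :=
  startsAt π q ∧ ∀ i ≤ π.length, 0 ≤ vecAt π u i

/-- For `j ∈ {1,2}`, the path `π` is `{j}`-enabled in the configuration `(q, u)`:
it starts at `q` and the `j`-th coordinate of all intermediate counter values is
nonnegative. -/
def JEnabled {n : ℕ} (π : List (Transition n)) (q : Fin n) (u : Vec2) (j : Fin 2) : Prop :=
  startsAt π q ∧ ∀ i ≤ π.length, 0 ≤ proj j (vecAt π u i)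

/-- A run of `V`: a path of `V` enabled in the configuration `(q, u)`.
Its source is `(q, u)`, its target is `(endState π q, vecAt π u π.length)`,
and its configurations are `(stateAt π q i, vecAt π u i)` for `i ≤ π.length`. -/
def IsRun {n : ℕ} (V : VASS n) (π : List (Transition n)) (q : Fin n) (u : Vec2) : Prop :=
  IsPath V π ∧ Enabled π q u

/-- A (0,0)-run of `V`: a run whose source and target counter values are `(0,0)`. -/
def IsZeroRun {n : ℕ} (V : VASS n) (π : List (Transition n)) (q : Fin n) : Prop :=
  IsRun V π q 0 ∧ effect π = 0

/-- A cycle of `V`: a nonempty path of `V` whose starting and ending control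
states coincide. -/
def IsCycle {n : ℕ} (V : VASS n) (γ : List (Transition n)) : Prop :=
  IsPath V γ ∧ γ ≠ [] ∧ γ.head?.map (fun t => t.1) = γ.getLast?.map (fun t => t.2.2)

/-!
Record along the run only the control state and the value of the bounded coordinate `j`: at most
`K * n` such pairs are visited, so the run becomes a path in a small finite graph whose arrows
carry the change of the other coordinate as weight. A path in which all closed subpaths have
nonpositive weight can be shortened, without losing weight, to one with fewer arrows than vertices
and hence of weight at most `K * n * M`. As the other coordinate grows by more than that, there is
a closed path of positive weight and length at most `K * n`. Rotated to start where its partial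
weights are minimal, it never decreases the other coordinate below its initial value, so it is
enabled at every configuration of the run that lies over its base point.
-/

open Quiver

section WeightedPaths

variable {α : Type*} [Quiver α] {a b c d : α}

theorem mem_vertices_comp {p : Path a b} {q : Path b c} {x : α} :
    x ∈ (p.comp q).vertices ↔ x ∈ p.vertices ∨ x ∈ q.vertices := by
  induction q with
  | nil =>
    suffices x = b → x ∈ p.vertices by simpa
    rintro rfl
    exact p.end_mem_vertices
  | cons q e ih => simp only [Path.comp_cons, Path.mem_vertices_cons, ih, or_assoc]

theorem comp_eq_comp_cases {p : Path a b} {q : Path b d} {p' : Path a c} {q' : Path c d}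
    (h : p.comp q = p'.comp q') :
    (∃ m : Path b c, p' = p.comp m ∧ q = m.comp q') ∨
      ∃ m : Path c b, p = p'.comp m ∧ q' = m.comp q := by
  induction q with
  | nil => exact .inr ⟨q', h, rfl⟩
  | cons q e ih =>
    cases q' with
    | nil => exact .inl ⟨q.cons e, h.symm, rfl⟩
    | cons q' e' =>
      obtain rfl := Path.obj_eq_of_cons_eq_cons h
      obtain rfl := eq_of_heq (Path.hom_heq_of_cons_eq_cons h)
      rcases ih (eq_of_heq (Path.heq_of_cons_eq_cons h)) with ⟨m, hp, hq⟩ | ⟨m, hp, hq⟩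
      · exact .inl ⟨m, hp, by rw [hq, Path.comp_cons]⟩
      · exact .inr ⟨m, hp, by rw [hq, Path.comp_cons]⟩

theorem exists_eq_comp_of_getElem_vertices_eq (p : Path a b) {i k : ℕ} (hik : i < k)
    (hk : k < p.vertices.length) (heq : p.vertices[i] = p.vertices[k]) :
    ∃ (c : α) (q : Path a c) (z : Path c c) (r : Path c b),
      p = (q.comp z).comp r ∧ z.length = k - i := by
  obtain ⟨c, p', r, rfl, rfl, hc⟩ := p.exists_eq_comp_and_length_eq_of_lt_length k hk
  obtain ⟨c', q, z, rfl, rfl, hc'⟩ :=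
    p'.exists_eq_comp_and_length_eq_of_lt_length i (by rw [Path.vertices_length]; omega)
  obtain rfl : c' = c := by
    rw [hc, ← heq]
    simp only [Path.comp_assoc]
    exact (Path.vertices_comp_get_length_eq q (z.comp r)).symm
  exact ⟨c', q, z, r, rfl, by rw [Path.length_comp, Nat.add_sub_cancel_left]⟩

theorem exists_eq_comp_closed_of_card_le_length (p : Path a b) {S : Finset α}
    (hS : ∀ x ∈ p.vertices, x ∈ S) (hlen : S.card ≤ p.length) :
    ∃ (c : α) (q : Path a c) (z : Path c c) (r : Path c b),
      p = (q.comp z).comp r ∧ 0 < z.length ∧ z.length ≤ S.card := by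
  have hlt (i : Fin (S.card + 1)) : i.1 < p.vertices.length := by
    rw [Path.vertices_length]; omega
  obtain ⟨i, -, k, -, hne, heq⟩ := Finset.exists_ne_map_eq_of_card_lt_of_maps_to
    (s := Finset.univ) (t := S) (by simp) (f := fun i => p.vertices[i.1]'(hlt i))
    (fun i _ => hS _ (List.getElem_mem _))
  wlog hik : i < k generalizing i k
  · exact this k i hne.symm heq.symm (lt_of_le_of_ne (not_lt.1 hik) hne.symm)
  obtain ⟨c, q, z, r, hp, hz⟩ := exists_eq_comp_of_getElem_vertices_eq p hik (hlt k) heq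
  exact ⟨c, q, z, r, hp, by omega, by omega⟩

variable {R : Type*} (w : ∀ {a b : α}, (a ⟶ b) → R)

theorem length_pos_of_addWeight_ne_zero [AddMonoid R] {p : Path a b} (hp : p.addWeight w ≠ 0) :
    0 < p.length := by
  cases p with
  | nil => exact absurd (Path.addWeight_nil w a) hp
  | cons p e => exact Nat.succ_pos _

theorem addWeight_le_length_nsmul [AddCommMonoid R] [PartialOrder R] [IsOrderedAddMonoid R]
    {M : R} (hM : ∀ {a b : α} (e : a ⟶ b), w e ≤ M) (p : Path a b) :
    p.addWeight w ≤ p.length • M := by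
  induction p with
  | nil => simp
  | cons p e ih =>
    rw [Path.addWeight_cons, Path.length_cons, succ_nsmul]
    exact add_le_add ih (hM e)

theorem exists_prefix_addWeight_minimal [AddMonoid R] [LinearOrder R] (p : Path a b) :
    ∃ (c : α) (q : Path a c) (r : Path c b), p = q.comp r ∧
      ∀ {d : α} (q' : Path a d) (r' : Path d b), p = q'.comp r' →
        q.addWeight w ≤ q'.addWeight w := by
  induction p with
  | nil =>
    refine ⟨a, .nil, .nil, rfl, fun q' r' h => ?_⟩
    have hq' := Path.nil_of_comp_eq_nil_left h.symm
    obtain rfl := Path.eq_of_length_zero q' hq'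
    rw [Path.eq_nil_of_length_zero q' hq']
  | @cons b' b p e ih =>
    obtain ⟨c, q, r, hp, hmin⟩ := ih
    have eq_weight_or_comp {d : α} (q' : Path a d) (r' : Path d b) (h : p.cons e = q'.comp r') :
        (p.cons e).addWeight w = q'.addWeight w ∨ ∃ m : Path d b', p = q'.comp m := by
      cases r' with
      | nil => exact .inl (by rw [h, Path.comp_nil])
      | cons m e' =>
        obtain rfl := Path.obj_eq_of_cons_eq_cons h
        exact .inr ⟨m, eq_of_heq (Path.heq_of_cons_eq_cons h)⟩
    rcases le_total (q.addWeight w) ((p.cons e).addWeight w) with hle | hle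
    · refine ⟨c, q, r.cons e, by rw [hp, Path.comp_cons], fun q' r' h => ?_⟩
      rcases eq_weight_or_comp q' r' h with hw | ⟨m, hm⟩
      · exact hle.trans_eq hw
      · exact hmin q' m hm
    · refine ⟨b, p.cons e, .nil, rfl, fun q' r' h => ?_⟩
      rcases eq_weight_or_comp q' r' h with hw | ⟨m, hm⟩
      · exact hw.le
      · exact hle.trans (hmin q' m hm)

theorem exists_short_closed_addWeight_pos [AddCommMonoid R] [LinearOrder R]
    [IsOrderedAddMonoid R] {M : R} (hM₀ : 0 ≤ M)
    (hM : ∀ {a b : α} (e : a ⟶ b), w e ≤ M) {S : Finset α} (p : Path a b)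
    (hS : ∀ x ∈ p.vertices, x ∈ S) (hp : S.card • M < p.addWeight w) :
    ∃ (c : α) (z : Path c c),
      (∀ x ∈ z.vertices, x ∈ S) ∧ z.length ≤ S.card ∧ 0 < z.addWeight w := by
  induction hN : p.length using Nat.strong_induction_on generalizing p with | _ N ih
  have hlen : S.card ≤ p.length := by
    by_contra! hlt
    exact hp.not_ge ((addWeight_le_length_nsmul w hM p).trans (nsmul_le_nsmul_left hM₀ hlt.le))
  obtain ⟨c, q, z, r, rfl, hz₀, hz⟩ := exists_eq_comp_closed_of_card_le_length p hS hlen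
  simp only [mem_vertices_comp] at hS
  by_cases hpos : 0 < z.addWeight w
  · exact ⟨c, z, fun x hx => hS x (.inl (.inr hx)), hz, hpos⟩
  · have hshorter : (q.comp r).length < N := by
      simp only [← hN, Path.length_comp]; omega
    have hheavier : ((q.comp z).comp r).addWeight w ≤ (q.comp r).addWeight w := by
      simp only [Path.addWeight_comp]
      gcongr
      exact add_le_of_nonpos_right (not_lt.1 hpos)
    refine ih _ hshorter (q.comp r) (fun x hx => hS x ?_) (hp.trans_le hheavier) rfl
    exact (mem_vertices_comp.1 hx).imp_left .inl

theorem exists_rotation_addWeight_prefix_nonneg [AddCommMonoid R] [LinearOrder R]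
    [IsOrderedCancelAddMonoid R] (z : Path a a) (hz : 0 ≤ z.addWeight w) :
    ∃ (c : α) (z' : Path c c),
      (∀ x ∈ z'.vertices, x ∈ z.vertices) ∧ z'.length = z.length ∧
      z'.addWeight w = z.addWeight w ∧
      ∀ {d : α} (q : Path c d) (r : Path d c), z' = q.comp r → 0 ≤ q.addWeight w := by
  obtain ⟨c, q, r, rfl, hmin⟩ := exists_prefix_addWeight_minimal w z
  refine ⟨c, r.comp q, fun x hx => mem_vertices_comp.2 (mem_vertices_comp.1 hx).symm, ?_, ?_,
    fun q' r' h => ?_⟩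
  · rw [Path.length_comp, Path.length_comp, add_comm]
  · rw [Path.addWeight_comp, Path.addWeight_comp, add_comm]
  rcases comp_eq_comp_cases h with ⟨m, rfl, rfl⟩ | ⟨m, rfl, -⟩
  · calc
      0 ≤ ((m.comp r').comp r).addWeight w := hz
      _ = r.addWeight w + (m.comp r').addWeight w := by rw [Path.addWeight_comp, add_comm]
      _ ≤ r.addWeight w + m.addWeight w := by
        gcongr
        exact hmin m (r'.comp r) (Path.comp_assoc ..)
      _ = (r.comp m).addWeight w := (Path.addWeight_comp ..).symm
  · have hle := hmin (q.comp q') m (Path.comp_assoc ..).symm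
    rwa [Path.addWeight_comp, le_add_iff_nonneg_right] at hle

end WeightedPaths

section Configurations

variable {n : ℕ} {V : VASS n} {π : List (Transition n)} {q : Fin n} {u : Vec2}

theorem proj_add (j : Fin 2) (v w : Vec2) : proj j (v + w) = proj j v + proj j w := by
  unfold proj; split <;> rfl

theorem proj_le_vnorm (j : Fin 2) (v : Vec2) : proj j v ≤ vnorm v := by
  unfold proj vnorm; split <;> omega

theorem nonneg_iff_proj (j : Fin 2) (v : Vec2) : 0 ≤ v ↔ 0 ≤ proj j v ∧ 0 ≤ proj (1 - j) v := by
  rw [Prod.le_def]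
  fin_cases j <;> simp [proj, and_comm]

theorem vnorm_eq_max_proj (j : Fin 2) {v : Vec2} (hv : 0 ≤ v) :
    (vnorm v : ℤ) = max (proj j v) (proj (1 - j) v) := by
  obtain ⟨h₁, h₂⟩ := Prod.le_def.1 hv
  simp only [Prod.fst_zero, Prod.snd_zero] at h₁ h₂
  fin_cases j <;> simp [proj, vnorm, abs_of_nonneg h₁, abs_of_nonneg h₂, max_comm]

theorem vert_or_horiz_of_proj {j : Fin 2} {v : Vec2} (h₀ : proj j v = 0)
    (h₁ : 0 < proj (1 - j) v) : Vert v ∨ Horiz v := by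
  fin_cases j
  · exact .inl ⟨h₀, h₁⟩
  · exact .inr ⟨h₁, h₀⟩

theorem vnorm_le_vassNorm {t : Transition n} (ht : t ∈ V) : vnorm t.2.1 ≤ vassNorm V :=
  Finset.le_sup (f := fun t : Transition n => vnorm t.2.1) ht

theorem proj_le_vassNorm (j : Fin 2) {t : Transition n} (ht : t ∈ V) :
    proj j t.2.1 ≤ vassNorm V :=
  (proj_le_vnorm j t.2.1).trans (by exact_mod_cast vnorm_le_vassNorm ht)

theorem effect_singleton (t : Transition n) : effect [t] = t.2.1 := List.sum_singleton

theorem effect_append (π π' : List (Transition n)) : effect (π ++ π') = effect π + effect π' := by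
  simp [effect]

theorem vecAt_length : vecAt π u π.length = u + effect π := by rw [vecAt, List.take_length]

theorem vecAt_succ {i : ℕ} (hi : i < π.length) :
    vecAt π u (i + 1) = vecAt π u i + π[i].2.1 := by
  rw [vecAt, ← List.take_append_getElem hi, effect_append, effect_singleton, ← add_assoc, ← vecAt]

theorem stateAt_succ {i : ℕ} (hi : i < π.length) : stateAt π q (i + 1) = π[i].2.2 := by
  rw [stateAt, ← List.take_append_getElem hi, List.getLast?_concat, Option.map_some,
    Option.getD_some]

theorem endState_append_singleton (t : Transition n) : endState (π ++ [t]) q = t.2.2 := by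
  rw [endState, stateAt, List.take_length, List.getLast?_concat, Option.map_some, Option.getD_some]

theorem IsPath.stateAt_eq (hπ : IsPath V π) (hq : startsAt π q) {i : ℕ} (hi : i < π.length) :
    stateAt π q i = π[i].1 := by
  cases i with
  | zero => simpa [stateAt] using (hq π[0] (by simp [List.head?_eq_getElem?])).symm
  | succ i => rw [stateAt_succ (by omega)]; exact List.isChain_iff_getElem.1 hπ.2 i hi

theorem IsPath.append_singleton (hπ : IsPath V π) {t : Transition n} (ht : t ∈ V)
    (hlast : endState π q = t.1) : IsPath V (π ++ [t]) := by
  refine ⟨fun s hs => ?_, List.isChain_append.2 ⟨hπ.2, .singleton t, fun s hs t' ht' => ?_⟩⟩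
  · rcases List.mem_append.1 hs with hs | hs
    · exact hπ.1 s hs
    · rwa [List.mem_singleton.1 hs]
  · obtain rfl : t = t' := by simpa using ht'
    rw [Option.mem_def] at hs
    simpa [endState, stateAt, hs] using hlast

theorem IsPath.isCycle (hπ : IsPath V π) (hne : π ≠ []) (hstart : startsAt π q)
    (hend : endState π q = q) : IsCycle V π := by
  refine ⟨hπ, hne, ?_⟩
  have hlast := List.getLast?_eq_some_getLast hne
  have hhead := List.head?_eq_some_head hne
  rw [hlast, hhead]
  simp only [endState, stateAt, List.take_length, hlast, Option.map_some, Option.getD_some] at hend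
  simp [hend, hstart _ hhead]

theorem IsPath.vassNorm_pos (hπ : IsPath V π) (hgrow : vnorm u < vnorm (vecAt π u π.length)) :
    0 < vassNorm V := by
  by_contra! hM
  have heffect : effect π = 0 := List.sum_eq_zero fun v hv => by
    obtain ⟨t, ht, rfl⟩ := List.mem_map.1 hv
    have hnorm : max t.2.1.1.natAbs t.2.1.2.natAbs ≤ 0 := (vnorm_le_vassNorm (hπ.1 t ht)).trans hM
    ext <;> simp only [Prod.fst_zero, Prod.snd_zero] <;> omega
  rw [vecAt_length, heffect, add_zero] at hgrow
  exact hgrow.false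

end Configurations

/-- A control state of `V` together with a value of the counter `j`: what remains of a
configuration when the other counter is forgotten. The states and levels do not depend on `V` and
`j`; these parameters only select the arrows below. -/
@[ext]
structure LevelConfig {n : ℕ} (V : VASS n) (j : Fin 2) where
  state : Fin n
  level : ℤ

namespace LevelConfig

variable {n : ℕ} {V : VASS n} {j : Fin 2} {a b c : LevelConfig V j}

/-- The graph of one-counter steps of `V`: an arrow is a transition of `V` fired at the level of its
source. Levels may be negative here; finiteness and nonnegativity are imposed on the set of
vertices a path visits. -/
instance : Quiver (LevelConfig V j) where
  Hom a b := {t : Transition n //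
    t ∈ V ∧ t.1 = a.state ∧ t.2.2 = b.state ∧ b.level = a.level + proj j t.2.1}

/-- The weight of an arrow: the change of the forgotten counter. -/
def drift {a b : LevelConfig V j} (e : a ⟶ b) : ℤ := proj (1 - j) e.1.2.1

/-- The sequence of transitions of `V` fired along a path of one-counter steps. -/
def transitions : ∀ {b : LevelConfig V j}, Path a b → List (Transition n)
  | _, .nil => []
  | _, .cons p e => transitions p ++ [e.1]

theorem transitions_comp (p : Path a b) (q : Path b c) :
    transitions (p.comp q) = transitions p ++ transitions q := by
  induction q with
  | nil => simp [transitions]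
  | cons q e ih => simp [transitions, ih]

theorem length_transitions (p : Path a b) : (transitions p).length = p.length := by
  induction p with
  | nil => rfl
  | cons p e ih => simp [transitions, ih]

theorem level_add_proj_effect (p : Path a b) :
    a.level + proj j (effect (transitions p)) = b.level := by
  induction p with
  | nil => simp [transitions, effect, proj]
  | cons p e ih =>
    rw [transitions, effect_append, proj_add, ← add_assoc, ih, effect_singleton]
    exact e.2.2.2.2.symm

theorem proj_effect_transitions (p : Path a b) :
    proj (1 - j) (effect (transitions p)) = p.addWeight drift := by
  induction p with
  | nil => simp [transitions, effect, proj]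
  | cons p e ih =>
    rw [transitions, effect_append, proj_add, ih, effect_singleton, Path.addWeight_cons, drift]

theorem startsAt_transitions (p : Path a b) : startsAt (transitions p) a.state := by
  induction p with
  | nil => simp [transitions, startsAt]
  | cons p e ih =>
    cases p with
    | nil => simpa [transitions, startsAt] using e.2.2.1
    | cons p e' => simpa [transitions, startsAt] using ih

theorem endState_transitions (p : Path a b) : endState (transitions p) a.state = b.state := by
  cases p with
  | nil => rfl
  | cons p e => rw [transitions, endState_append_singleton, e.2.2.2.1]

theorem isPath_transitions (p : Path a b) : IsPath V (transitions p) := by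
  induction p with
  | nil => exact ⟨by simp [transitions], .nil⟩
  | cons p e ih =>
    exact ih.append_singleton e.2.1 ((endState_transitions p).trans e.2.2.1.symm)

theorem isCycle_transitions (z : Path a a) (hz : 0 < z.length) : IsCycle V (transitions z) :=
  (isPath_transitions z).isCycle (List.ne_nil_of_length_pos (by rwa [length_transitions]))
    (startsAt_transitions z) (endState_transitions z)

theorem enabled_transitions (p : Path a b) {v : Vec2} (hv : proj j v = a.level)
    (hv' : 0 ≤ proj (1 - j) v) (hlevel : ∀ x ∈ p.vertices, 0 ≤ x.level)
    (hdrift : ∀ {d : LevelConfig V j} (q : Path a d) (r : Path d b), p = q.comp r →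
      0 ≤ q.addWeight drift) :
    Enabled (transitions p) a.state v := by
  refine ⟨startsAt_transitions p, fun i hi => ?_⟩
  rw [length_transitions] at hi
  obtain ⟨d, q, r, rfl, rfl⟩ := p.exists_eq_comp_of_le_length hi
  have htake : (transitions (q.comp r)).take q.length = transitions q := by
    rw [transitions_comp, ← length_transitions, List.take_left]
  rw [vecAt, htake, nonneg_iff_proj j, proj_add, proj_add, hv, level_add_proj_effect,
    proj_effect_transitions]
  exact ⟨hlevel d (mem_vertices_comp.2 (.inl q.end_mem_vertices)),
    add_nonneg hv' (hdrift q r rfl)⟩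

/-- The trace at time `i` of the path `π` from the configuration `(q, u)`. -/
def ofRun (V : VASS n) (j : Fin 2) (π : List (Transition n)) (q : Fin n) (u : Vec2) (i : ℕ) :
    LevelConfig V j :=
  ⟨stateAt π q i, proj j (vecAt π u i)⟩

variable {π : List (Transition n)} {q : Fin n} {u : Vec2}

theorem exists_path_ofRun (hπ : IsPath V π) (hq : startsAt π q) {i : ℕ} (hi : i ≤ π.length) :
    ∃ p : Path (ofRun V j π q u 0) (ofRun V j π q u i),
      transitions p = π.take i ∧ ∀ x ∈ p.vertices, ∃ k ≤ i, ofRun V j π q u k = x := by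
  induction i with
  | zero => exact ⟨.nil, rfl, fun x hx => ⟨0, le_rfl, (List.mem_singleton.1 hx).symm⟩⟩
  | succ i ih =>
    obtain ⟨p, hp, hvertices⟩ := ih (by omega)
    let e : ofRun V j π q u i ⟶ ofRun V j π q u (i + 1) :=
      ⟨π[i], hπ.1 _ (List.getElem_mem hi), (hπ.stateAt_eq hq hi).symm, (stateAt_succ hi).symm,
        by simp only [ofRun, vecAt_succ hi, proj_add]⟩
    refine ⟨p.cons e, by rw [transitions, hp, ← List.take_append_getElem hi], fun x hx => ?_⟩
    rcases (Path.mem_vertices_cons p e).1 hx with hx | rfl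
    · obtain ⟨k, hk, rfl⟩ := hvertices x hx
      exact ⟨k, by omega, rfl⟩
    · exact ⟨i + 1, le_rfl, rfl⟩

theorem card_le_of_level_mem_Ico {S : Finset (LevelConfig V j)} {K : ℕ}
    (hS : ∀ a ∈ S, a.level ∈ Finset.Ico 0 (K : ℤ)) : S.card ≤ K * n := by
  calc
    S.card ≤ (Finset.Ico 0 (K : ℤ) ×ˢ (Finset.univ : Finset (Fin n))).card :=
      Finset.card_le_card_of_injOn (fun a => (a.level, a.state))
        (fun a ha => Finset.mem_product.2 ⟨hS a ha, Finset.mem_univ _⟩)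
        (fun a _ b _ hab => LevelConfig.ext (Prod.ext_iff.1 hab).2 (Prod.ext_iff.1 hab).1)
    _ = K * n := by simp

end LevelConfig

section Runs

variable {n : ℕ} {V : VASS n} {π : List (Transition n)} {q : Fin n} {u : Vec2} {K : ℕ} {j : Fin 2}

open LevelConfig in
theorem IsRun.exists_short_cycle_of_proj_effect_gt (hπ : IsRun V π q u)
    (hK : ∀ i ≤ π.length, proj j (vecAt π u i) < (K : ℤ))
    (hgain : (K * n * vassNorm V : ℤ) < proj (1 - j) (effect π)) :
    ∃ i ≤ π.length, ∃ γ : List (Transition n),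
      IsCycle V γ ∧ Enabled γ (stateAt π q i) (vecAt π u i) ∧
      proj j (effect γ) = 0 ∧ 0 < proj (1 - j) (effect γ) ∧ γ.length ≤ K * n := by
  classical
  obtain ⟨hpath, hstart, hnonneg⟩ := hπ
  simp only [nonneg_iff_proj j] at hnonneg
  obtain ⟨p, hp, hvertices⟩ := exists_path_ofRun (u := u) (j := j) hpath hstart le_rfl
  rw [List.take_length] at hp
  let S := (Finset.range (π.length + 1)).image (ofRun V j π q u)
  have mem_S {x : LevelConfig V j} : x ∈ S ↔ ∃ i ≤ π.length, ofRun V j π q u i = x := by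
    simp [S]
  have hlevel : ∀ x ∈ S, x.level ∈ Finset.Ico 0 (K : ℤ) := fun x hx => by
    obtain ⟨i, hi, rfl⟩ := mem_S.1 hx
    exact Finset.mem_Ico.2 ⟨(hnonneg i hi).1, hK i hi⟩
  have hcard : S.card ≤ K * n := card_le_of_level_mem_Ico hlevel
  have hweight : S.card • (vassNorm V : ℤ) < p.addWeight drift := by
    rw [← proj_effect_transitions, hp, nsmul_eq_mul]
    refine lt_of_le_of_lt ?_ hgain
    gcongr
    exact_mod_cast hcard
  obtain ⟨b, z, hzS, hzlen, hzpos⟩ := exists_short_closed_addWeight_pos drift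
    (Nat.cast_nonneg _) (fun e => proj_le_vassNorm _ e.2.1) p
    (fun x hx => mem_S.2 (hvertices x hx)) hweight
  obtain ⟨c, γ, hγz, hγlen, hγweight, hγnonneg⟩ :=
    exists_rotation_addWeight_prefix_nonneg drift z hzpos.le
  have hγS : ∀ x ∈ γ.vertices, x ∈ S := fun x hx => hzS x (hγz x hx)
  obtain ⟨i, hi, rfl⟩ := mem_S.1 (hγS c γ.start_mem_vertices)
  rw [← hγweight] at hzpos
  have hγpos : 0 < γ.length := length_pos_of_addWeight_ne_zero drift hzpos.ne'
  refine ⟨i, hi, transitions γ, isCycle_transitions γ hγpos, ?_, ?_, ?_, ?_⟩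
  · exact enabled_transitions γ rfl (hnonneg i hi).2
      (fun x hx => (Finset.mem_Ico.1 (hlevel x (hγS x hx))).1) hγnonneg
  · exact left_eq_add.1 (level_add_proj_effect γ).symm
  · rwa [proj_effect_transitions]
  · rw [length_transitions, hγlen]
    exact hzlen.trans hcard

theorem IsRun.lt_proj_effect_of_vnorm_lt (hπ : IsRun V π q u)
    (hK : proj j (vecAt π u π.length) < (K : ℤ))
    (hgrow : vnorm u + K * n * vassNorm V < vnorm (vecAt π u π.length)) :
    (K * n * vassNorm V : ℤ) < proj (1 - j) (effect π) := by
  have hM : 0 < vassNorm V := hπ.1.vassNorm_pos ((Nat.le_add_right ..).trans_lt hgrow)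
  have hle : K * 1 * 1 ≤ K * n * vassNorm V := by
    gcongr
    · exact q.pos
    · exact hM
  have hsrc := proj_le_vnorm (1 - j) u
  have htrg := vnorm_eq_max_proj j (hπ.2.2 _ le_rfl)
  have hsplit : proj (1 - j) (vecAt π u π.length) = proj (1 - j) u + proj (1 - j) (effect π) := by
    rw [vecAt_length, proj_add]
  zify at hle hgrow
  rcases max_cases (proj j (vecAt π u π.length)) (proj (1 - j) (vecAt π u π.length)) <;> linarith

end Runs

/-- There is a polynomial `q` with natural coefficients such
that if along a run `ρ` of a 2-VASS `V` (with `n` states and norm `M`) some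
fixed coordinate `j` stays smaller than `K` in every configuration, and the
norm of the target exceeds the norm of the source by more than `K·n·M`,
then some configuration in `ρ` enables a cycle whose effect is vertical or
horizontal and whose length is at most `q(K·n·M)`. -/
theorem one_coordinate_bounded_short_cycle :
    ∃ qp : Polynomial ℕ,
      ∀ (n : ℕ) (V : VASS n) (π : List (Transition n)) (q : Fin n) (u : Vec2)
        (K : ℕ) (j : Fin 2),
        IsRun V π q u →
        (∀ i ≤ π.length, proj j (vecAt π u i) < (K : ℤ)) →
        vnorm u + K * n * vassNorm V < vnorm (vecAt π u π.length) →
        ∃ i ≤ π.length, ∃ γ : List (Transition n),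
          IsCycle V γ ∧ Enabled γ (stateAt π q i) (vecAt π u i) ∧
          (Vert (effect γ) ∨ Horiz (effect γ)) ∧
          γ.length ≤ qp.eval (K * n * vassNorm V) := by
  refine ⟨Polynomial.X, fun n V π q u K j hπ hK hgrow => ?_⟩
  have hM : 0 < vassNorm V := hπ.1.vassNorm_pos ((Nat.le_add_right ..).trans_lt hgrow)
  obtain ⟨i, hi, γ, hcycle, henabled, hj, hj', hlen⟩ :=
    hπ.exists_short_cycle_of_proj_effect_gt hK (hπ.lt_proj_effect_of_vnorm_lt (hK _ le_rfl) hgrow)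
  refine ⟨i, hi, γ, hcycle, henabled, vert_or_horiz_of_proj hj hj', ?_⟩
  rw [Polynomial.eval_X]
  exact hlen.trans (Nat.le_mul_of_pos_right _ hM)
end

section
/- Let V be a 2-VASS with n control states and norm M, and let S be a strongly connected component of V such that the effects of all cycles within S lie in a closed half-plane containing no positive vector, and such that no simple cycle within S has vertical or horizontal effect. Then every run ρ of V whose control states all lie within S satisfies ‖trg(ρ)‖ ≤ (‖src(ρ)‖ + (n−1)·M)·(1 + n·M). -/
/-- Reachability in the directed graph of `V`: there is a path of `V`
from `p` to `q` (possibly empty). -/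
def Reach {n : ℕ} (V : VASS n) (p q : Fin n) : Prop :=
  ∃ π : List (Transition n), IsPath V π ∧ startsAt π p ∧ endState π p = q

/-- `S` is a strongly connected component of the directed graph of `V`:
it is nonempty, all its states are mutually reachable, and it is maximal
with this property. -/
def IsSCC {n : ℕ} (V : VASS n) (S : Set (Fin n)) : Prop :=
  S.Nonempty ∧ (∀ p ∈ S, ∀ q ∈ S, Reach V p q) ∧
  (∀ p ∈ S, ∀ q : Fin n, Reach V p q → Reach V q p → q ∈ S)

/-- All control states occurring in the sequence of transitions `γ` belong to `S`. -/
def WithinS {n : ℕ} (S : Set (Fin n)) (γ : List (Transition n)) : Prop :=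
  ∀ t ∈ γ, t.1 ∈ S ∧ t.2.2 ∈ S

/-- A simple cycle: a cycle in which no control state repeats, except that the
first state equals the last. -/
def IsSimpleCycle {n : ℕ} (V : VASS n) (γ : List (Transition n)) : Prop :=
  IsCycle V γ ∧ (γ.map (fun t => t.1)).Nodup

/-!
Contracting loops one at a time, a path within `S` decomposes, up to reordering, into a path
without repeated states, of effect at most `(n - 1) * M`, and simple cycles, each of effect at most
`n * M`.

The half-plane contains no positive vector, so its normal `w` is nonpositive and nonzero. Let `N`
bound the norms of the effects of the simple cycles. Because none of these effects is vertical, they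
all lie on or below a line through the origin of slope between `-N` and `0`: if one of them points
right, it falls by at most `N`, so the boundary of the half-plane is such a line; otherwise the line
of slope `-N` works, since the effects pointing left climb by at most `N` and those on the vertical
axis do not climb. Hence the cycles can raise the second counter only by lowering the first one, at
a rate of at most `N`, and the first counter must stay nonnegative. Exchanging the coordinates
bounds the first counter.
-/

section LabelledGraph

open scoped List

variable {α β : Type*} {p : List (α × β × α)} {a b c : α}

/-- `Walk p a b`: the list `p` of labelled edges (source, label, target) leads from `a` to `b`.
Unlike `IsPath`, it fixes both endpoints also when `p` is empty. -/
inductive Walk : List (α × β × α) → α → α → Prop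
  | nil (a : α) : Walk [] a a
  | cons {p : List (α × β × α)} {b : α} (t : α × β × α) (h : Walk p t.2.2 b) : Walk (t :: p) t.1 b

/-- The vertices visited by a walk `p` that ends in `b`, in order. -/
def visited (p : List (α × β × α)) (b : α) : List α :=
  p.map (fun t => t.1) ++ [b]

/-- A simple closed walk: it is nonempty and leaves each of its vertices only once. -/
def IsSimpleClosedWalk (p : List (α × β × α)) : Prop :=
  p ≠ [] ∧ (∃ a, Walk p a a) ∧ (p.map (fun t => t.1)).Nodup

theorem exists_walk_of_isChain {t : α × β × α}
    (h : (t :: p).IsChain (fun s t => s.2.2 = t.1)) : ∃ b, Walk (t :: p) t.1 b := by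
  induction p generalizing t with
  | nil => exact ⟨_, .cons t (.nil _)⟩
  | cons s p ih =>
    obtain ⟨hts, hp⟩ := List.isChain_cons_cons.1 h
    obtain ⟨b, hb⟩ := ih hp
    exact ⟨b, .cons t (hts ▸ hb)⟩

namespace Walk

theorem source_eq_of_mem_head? {s : α × β × α} (h : Walk p a b) (hs : s ∈ p.head?) : s.1 = a := by
  cases h with
  | nil => cases hs
  | cons t h => exact congrArg Prod.fst (Option.mem_some_iff.1 hs).symm

theorem target_eq_of_mem_getLast? {s : α × β × α} (h : Walk p a b) (hs : s ∈ p.getLast?) :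
    s.2.2 = b := by
  induction h with
  | nil => cases hs
  | @cons p b t h ih =>
    obtain rfl | hp := eq_or_ne p []
    · cases h
      rw [List.getLast?_singleton, Option.mem_some_iff] at hs
      rw [hs]
    · exact ih (by rwa [List.getLast?_cons_of_ne_nil hp] at hs)

theorem isChain (h : Walk p a b) : p.IsChain (fun s t => s.2.2 = t.1) := by
  induction h with
  | nil => exact .nil
  | cons t h ih => exact List.isChain_cons.2 ⟨fun s hs => (h.source_eq_of_mem_head? hs).symm, ih⟩

theorem start_mem_visited (h : Walk p a b) : a ∈ visited p b := by
  cases h <;> simp [visited]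

theorem exists_append_of_mem_visited (h : Walk p a b) (hc : c ∈ visited p b) :
    ∃ p₁ p₂, p = p₁ ++ p₂ ∧ Walk p₁ a c ∧ Walk p₂ c b := by
  induction h with
  | nil a =>
    obtain rfl : c = a := by simpa [visited] using hc
    exact ⟨[], [], rfl, .nil c, .nil c⟩
  | @cons p b t h ih =>
    obtain rfl | hc : c = t.1 ∨ c ∈ visited p b := by simpa [visited] using hc
    · exact ⟨[], t :: p, rfl, .nil _, .cons t h⟩
    · obtain ⟨p₁, p₂, rfl, h₁, h₂⟩ := ih hc
      exact ⟨t :: p₁, p₂, rfl, .cons t h₁, h₂⟩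

theorem exists_perm_append_flatten (h : Walk p a b) :
    ∃ (r : List (α × β × α)) (cs : List (List (α × β × α))),
      Walk r a b ∧ (visited r b).Nodup ∧ (∀ γ ∈ cs, IsSimpleClosedWalk γ) ∧
        p ~ r ++ cs.flatten := by
  induction h with
  | nil a => exact ⟨[], [], .nil a, by simp [visited], by simp, by simp⟩
  | @cons p b t _ ih =>
    obtain ⟨r, cs, hr, hnodup, hcs, hperm⟩ := ih
    by_cases hmem : t.1 ∈ visited r b
    · obtain ⟨r₁, r₂, rfl, h₁, h₂⟩ := hr.exists_append_of_mem_visited hmem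
      obtain ⟨hnodup₁, hnodup₂, hdisjoint⟩ :
          (r₁.map (fun t => t.1)).Nodup ∧ (visited r₂ b).Nodup ∧
            (r₁.map (fun t => t.1)).Disjoint (visited r₂ b) := by
        rwa [← List.nodup_append', visited, ← List.append_assoc, ← List.map_append]
      have hclosed : IsSimpleClosedWalk (t :: r₁) :=
        ⟨List.cons_ne_nil _ _, ⟨t.1, .cons t h₁⟩,
          List.nodup_cons.2 ⟨fun ht => hdisjoint ht h₂.start_mem_visited, hnodup₁⟩⟩
      refine ⟨r₂, (t :: r₁) :: cs, h₂, hnodup₂, List.forall_mem_cons.2 ⟨hclosed, hcs⟩, ?_⟩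
      calc t :: p
        _ ~ t :: (r₁ ++ r₂ ++ cs.flatten) := hperm.cons t
        _ ~ r₂ ++ ((t :: r₁) :: cs).flatten := by
          simpa using (List.perm_append_comm (l₁ := t :: r₁) (l₂ := r₂)).append_right cs.flatten
    · exact ⟨t :: r, cs, .cons t hr, List.nodup_cons.2 ⟨hmem, hnodup⟩, hcs, hperm.cons t⟩

end Walk

end LabelledGraph

section Norm

theorem abs_fst_le_vnorm (v : Vec2) : |v.1| ≤ vnorm v := by
  simp [vnorm]

theorem abs_snd_le_vnorm (v : Vec2) : |v.2| ≤ vnorm v := by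
  simp [vnorm]

theorem vnorm_add_le (v w : Vec2) : vnorm (v + w) ≤ vnorm v + vnorm w := by
  simp only [vnorm, Prod.fst_add, Prod.snd_add]
  omega

variable {n : ℕ} {V : VASS n}

theorem vnorm_effect_le_length_mul {π : List (Transition n)} (hV : ∀ t ∈ π, t ∈ V) :
    vnorm (effect π) ≤ π.length * vassNorm V := by
  induction π with
  | nil => simp [effect, vnorm]
  | cons t π ih =>
    obtain ⟨ht, hπ⟩ := List.forall_mem_cons.1 hV
    calc vnorm (effect (t :: π))
      _ = vnorm (t.2.1 + effect π) := by simp [effect]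
      _ ≤ vnorm t.2.1 + vnorm (effect π) := vnorm_add_le _ _
      _ ≤ vassNorm V + π.length * vassNorm V :=
        add_le_add (Finset.le_sup (f := fun t : Transition n => vnorm t.2.1) ht) (ih hπ)
      _ = (t :: π).length * vassNorm V := by rw [List.length_cons]; ring

theorem IsSimpleCycle.vnorm_effect_le {γ : List (Transition n)} (hγ : IsSimpleCycle V γ) :
    vnorm (effect γ) ≤ n * vassNorm V := by
  have hlength : γ.length ≤ n := by simpa using hγ.2.length_le_card
  exact (vnorm_effect_le_length_mul hγ.1.1.1).trans (Nat.mul_le_mul_right _ hlength)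

end Norm

section Decomposition

variable {n : ℕ} {V : VASS n} {S : Set (Fin n)} {π : List (Transition n)}

theorem IsSimpleClosedWalk.isSimpleCycle (h : IsSimpleClosedWalk π) (hV : ∀ t ∈ π, t ∈ V) :
    IsSimpleCycle V π := by
  obtain ⟨hne, ⟨a, hwalk⟩, hnodup⟩ := h
  refine ⟨⟨⟨hV, hwalk.isChain⟩, hne, ?_⟩, hnodup⟩
  rw [List.head?_eq_some_head hne, List.getLast?_eq_some_getLast hne, Option.map_some,
    Option.map_some, hwalk.source_eq_of_mem_head? (List.head?_eq_some_head hne),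
    hwalk.target_eq_of_mem_getLast? (List.getLast?_eq_some_getLast hne)]

theorem effect_append_flatten (r : List (Transition n)) (cs : List (List (Transition n))) :
    effect (r ++ cs.flatten) = effect r + (cs.map effect).sum := by
  simp only [effect, List.map_append, List.sum_append, List.map_flatten, List.sum_flatten,
    List.map_map]
  rfl

theorem IsPath.exists_effect_eq_add_sum (hπ : IsPath V π) (hS : WithinS S π) :
    ∃ (d : Vec2) (cs : List (List (Transition n))), vnorm d ≤ (n - 1) * vassNorm V ∧
      (∀ γ ∈ cs, IsSimpleCycle V γ ∧ WithinS S γ) ∧ effect π = d + (cs.map effect).sum := by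
  obtain - | ⟨t, p⟩ := π
  · exact ⟨0, [], by simp [vnorm], by simp, by simp [effect]⟩
  obtain ⟨b, hwalk⟩ := exists_walk_of_isChain hπ.2
  obtain ⟨r, cs, -, hnodup, hcs, hperm⟩ := hwalk.exists_perm_append_flatten
  have hr : r ⊆ t :: p := fun s hs => hperm.mem_iff.2 (List.mem_append_left _ hs)
  have hcs_subset : ∀ γ ∈ cs, γ ⊆ t :: p := fun γ hγ s hs =>
    hperm.mem_iff.2 (List.mem_append_right _ (List.mem_flatten_of_mem hγ hs))
  have hlength : r.length ≤ n - 1 :=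
    Nat.le_sub_one_of_lt (by simpa [visited] using hnodup.length_le_card)
  refine ⟨effect r, cs, ?_, fun γ hγ => ⟨?_, ?_⟩, ?_⟩
  · exact (vnorm_effect_le_length_mul fun s hs => hπ.1 s (hr hs)).trans
      (Nat.mul_le_mul_right _ hlength)
  · exact (hcs γ hγ).isSimpleCycle fun s hs => hπ.1 s (hcs_subset γ hγ hs)
  · exact fun s hs => hS s (hcs_subset γ hγ hs)
  · rw [← effect_append_flatten]
    exact (hperm.map _).sum_eq

theorem IsPath.withinS_of_forall_stateAt_mem {q : Fin n} (hπ : IsPath V π) (hq : startsAt π q)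
    (hS : ∀ i ≤ π.length, stateAt π q i ∈ S) : WithinS S π := by
  intro t ht
  obtain ⟨l₁, l₂, rfl⟩ := List.append_of_mem ht
  have hsource : stateAt (l₁ ++ t :: l₂) q l₁.length = t.1 := by
    rw [stateAt, List.take_left]
    obtain rfl | ⟨l, s, rfl⟩ := List.eq_nil_or_concat l₁
    · exact (hq t rfl).symm
    · have hst : s.2.2 = t.1 := (List.isChain_append.1 hπ.2).2.2 s (by simp) t rfl
      simpa using hst
  have htarget : stateAt (l₁ ++ t :: l₂) q (l₁.length + 1) = t.2.2 := by
    simp [stateAt, List.take_append]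
  exact ⟨hsource ▸ hS _ (by simp), htarget ▸ hS _ (by simp)⟩

end Decomposition

section HalfPlane

theorem normal_neg_of_no_positive {𝕜 : Type*} [CommRing 𝕜] [LinearOrder 𝕜] [IsStrictOrderedRing 𝕜]
    {w : 𝕜 × 𝕜} (h : ∀ x : 𝕜 × 𝕜, 0 < x.1 → 0 < x.2 → ¬ 0 ≤ w.1 * x.1 + w.2 * x.2) :
    w < 0 := by
  have hfst : w.1 ≤ 0 := by
    by_contra! hpos
    refine h (|w.2| + 1, w.1) (by positivity) hpos ?_
    nlinarith [neg_abs_le w.2]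
  have hsnd : w.2 ≤ 0 := by
    by_contra! hpos
    refine h (w.2, |w.1| + 1) hpos (by positivity) ?_
    nlinarith [neg_abs_le w.1]
  refine lt_of_le_of_ne ⟨hfst, hsnd⟩ ?_
  rintro rfl
  exact h (1, 1) one_pos one_pos (by simp)

variable {w : ℚ × ℚ} {N : ℕ}

theorem exists_slope_of_halfPlane {C : Set Vec2} (hw : w < 0)
    (hhalf : ∀ v ∈ C, 0 ≤ w.1 * v.1 + w.2 * v.2) (hN : ∀ v ∈ C, |v.2| ≤ N)
    (hvert : ∀ v ∈ C, ¬ Vert v) :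
    ∃ s : ℚ, 0 ≤ s ∧ s ≤ N ∧ ∀ v ∈ C, s * v.1 + v.2 ≤ 0 := by
  by_cases hright : ∃ v ∈ C, 0 < v.1
  · obtain ⟨v, hv, hpos⟩ := hright
    have hv₁ : (1 : ℚ) ≤ v.1 := by exact_mod_cast hpos
    have hv₂ : -(N : ℚ) ≤ v.2 := by exact_mod_cast (abs_le.1 (hN v hv)).1
    have hw₁ : w.1 ≤ 0 := hw.le.1
    have hw₂ : w.2 < 0 := by
      refine hw.le.2.lt_of_ne fun (hw₂ : w.2 = 0) => hw.ne (Prod.ext (hw₁.antisymm ?_) hw₂)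
      have hv := hhalf v hv
      rw [hw₂, zero_mul, add_zero] at hv
      exact nonneg_of_mul_nonneg_left hv (one_pos.trans_le hv₁)
    refine ⟨w.1 / w.2, div_nonneg_of_nonpos hw₁ hw₂.le, ?_, fun x hx => ?_⟩
    · rw [div_le_iff_of_neg hw₂]
      nlinarith [hhalf v hv]
    · have : w.1 / w.2 * x.1 + x.2 = (w.1 * x.1 + w.2 * x.2) / w.2 := by
        rw [add_div, mul_div_cancel_left₀ _ hw₂.ne, mul_div_right_comm]
      rw [this]
      exact div_nonpos_of_nonneg_of_nonpos (hhalf x hx) hw₂.le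
  · push Not at hright
    refine ⟨N, Nat.cast_nonneg N, le_rfl, fun v hv => ?_⟩
    suffices N * v.1 + v.2 ≤ 0 by exact_mod_cast this
    obtain hneg | hzero := (hright v hv).lt_or_eq
    · nlinarith [(abs_le.1 (hN v hv)).2]
    · have : v.2 ≤ 0 := not_lt.1 fun hpos => hvert v hv ⟨hzero, hpos⟩
      simpa [hzero] using this

variable {L : List Vec2} {K : ℕ}

theorem snd_sum_le_of_halfPlane (hw : w < 0)
    (hhalf : ∀ v ∈ L, 0 ≤ w.1 * v.1 + w.2 * v.2) (hN : ∀ v ∈ L, |v.2| ≤ N)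
    (hvert : ∀ v ∈ L, ¬ Vert v) (hK : -(K : ℤ) ≤ L.sum.1) : L.sum.2 ≤ K * N := by
  obtain ⟨s, hs₀, hsN, hs⟩ := exists_slope_of_halfPlane (C := {v | v ∈ L}) hw hhalf hN hvert
  have hsum : s * L.sum.1 + L.sum.2 ≤ 0 := by
    refine List.sum_induction (fun v : Vec2 => s * v.1 + v.2 ≤ 0) (fun x y hx hy => ?_) (by simp) hs
    push_cast [Prod.fst_add, Prod.snd_add]
    linarith
  have hKq : -(K : ℚ) ≤ L.sum.1 := by exact_mod_cast hK
  have : (L.sum.2 : ℚ) ≤ K * N := calc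
    (L.sum.2 : ℚ) ≤ s * -L.sum.1 := by linarith
    _ ≤ s * K := mul_le_mul_of_nonneg_left (neg_le.1 hKq) hs₀
    _ ≤ N * K := mul_le_mul_of_nonneg_right hsN K.cast_nonneg
    _ = K * N := mul_comm _ _
  exact_mod_cast this

theorem fst_sum_le_of_halfPlane (hw : w < 0)
    (hhalf : ∀ v ∈ L, 0 ≤ w.1 * v.1 + w.2 * v.2) (hN : ∀ v ∈ L, |v.1| ≤ N)
    (hhoriz : ∀ v ∈ L, ¬ Horiz v) (hK : -(K : ℤ) ≤ L.sum.2) : L.sum.1 ≤ K * N := by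
  have hswap : (L.map Prod.swap).sum = L.sum.swap :=
    (map_list_sum (AddEquiv.prodComm : Vec2 ≃+ Vec2) L).symm
  have := snd_sum_le_of_halfPlane (w := w.swap) (L := L.map Prod.swap) (N := N) (K := K)
    (Prod.swap_lt_swap.2 hw)
    (List.forall_mem_map.2 fun v hv => (hhalf v hv).trans_eq (add_comm _ _))
    (List.forall_mem_map.2 hN)
    (List.forall_mem_map.2 fun v hv h => hhoriz v hv h.symm)
  rw [hswap] at this
  exact this hK

theorem vnorm_add_sum_le_of_halfPlane {v : Vec2} (hw : w < 0)
    (hhalf : ∀ x ∈ L, 0 ≤ w.1 * x.1 + w.2 * x.2) (hN : ∀ x ∈ L, vnorm x ≤ N)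
    (hvert : ∀ x ∈ L, ¬ Vert x) (hhoriz : ∀ x ∈ L, ¬ Horiz x) (hsum : 0 ≤ v + L.sum) :
    vnorm (v + L.sum) ≤ vnorm v * (1 + N) := by
  obtain ⟨hsum₁, hsum₂⟩ : 0 ≤ v.1 + L.sum.1 ∧ 0 ≤ v.2 + L.sum.2 := hsum
  have hv₁ : |v.1| ≤ vnorm v := abs_fst_le_vnorm v
  have hv₂ : |v.2| ≤ vnorm v := abs_snd_le_vnorm v
  have hfst : L.sum.1 ≤ vnorm v * N :=
    fst_sum_le_of_halfPlane hw hhalf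
      (fun x hx => (abs_fst_le_vnorm x).trans (Nat.cast_le.2 (hN x hx)))
      hhoriz (by linarith [le_abs_self v.2])
  have hsnd : L.sum.2 ≤ vnorm v * N :=
    snd_sum_le_of_halfPlane hw hhalf
      (fun x hx => (abs_snd_le_vnorm x).trans (Nat.cast_le.2 (hN x hx)))
      hvert (by linarith [le_abs_self v.1])
  refine max_le ?_ ?_ <;> zify
  · rw [Prod.fst_add, abs_of_nonneg hsum₁]
    linarith [le_abs_self v.1]
  · rw [Prod.snd_add, abs_of_nonneg hsum₂]
    linarith [le_abs_self v.2]

end HalfPlane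

theorem scc_halfplane_bounded_general {n : ℕ} {V : VASS n} {S : Set (Fin n)} {w : ℚ × ℚ}
    (hnopos : ∀ x : ℚ × ℚ, 0 < x.1 → 0 < x.2 → ¬ (0 ≤ w.1 * x.1 + w.2 * x.2))
    (hcycles : ∀ γ : List (Transition n), IsSimpleCycle V γ → WithinS S γ →
      0 ≤ w.1 * ((effect γ).1 : ℚ) + w.2 * ((effect γ).2 : ℚ))
    (hnosimple : ¬ ∃ γ : List (Transition n), IsSimpleCycle V γ ∧ WithinS S γ ∧
      (Vert (effect γ) ∨ Horiz (effect γ)))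
    {π : List (Transition n)} {u : Vec2} (hπ : IsPath V π) (hS : WithinS S π)
    (htrg : 0 ≤ vecAt π u π.length) :
    vnorm (vecAt π u π.length) ≤
      (vnorm u + (n - 1) * vassNorm V) * (1 + n * vassNorm V) := by
  obtain ⟨d, cs, hd, hcs, heffect⟩ := hπ.exists_effect_eq_add_sum hS
  rw [vecAt, List.take_length, heffect, ← add_assoc] at htrg ⊢
  calc vnorm (u + d + (cs.map effect).sum)
    _ ≤ vnorm (u + d) * (1 + n * vassNorm V) :=
      vnorm_add_sum_le_of_halfPlane (normal_neg_of_no_positive hnopos)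
        (List.forall_mem_map.2 fun γ hγ => hcycles γ (hcs γ hγ).1 (hcs γ hγ).2)
        (List.forall_mem_map.2 fun γ hγ => (hcs γ hγ).1.vnorm_effect_le)
        (List.forall_mem_map.2 fun γ hγ hvert =>
          hnosimple ⟨γ, (hcs γ hγ).1, (hcs γ hγ).2, .inl hvert⟩)
        (List.forall_mem_map.2 fun γ hγ hhoriz =>
          hnosimple ⟨γ, (hcs γ hγ).1, (hcs γ hγ).2, .inr hhoriz⟩)
        htrg
    _ ≤ (vnorm u + (n - 1) * vassNorm V) * (1 + n * vassNorm V) :=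
      Nat.mul_le_mul_right _ ((vnorm_add_le u d).trans (Nat.add_le_add_left hd _))

/-- Let `S` be an SCC of a 2-VASS `V` (with `n` states and
norm `M`) such that the effects of all cycles within `S` lie in a closed
half-plane containing no positive vector, and no simple cycle within `S` has
vertical or horizontal effect.  Then every run within `S` satisfies
`‖trg‖ ≤ (‖src‖ + (n−1)·M)·(1 + n·M)`. -/
theorem scc_halfplane_bounded
    (n : ℕ) (V : VASS n) (S : Set (Fin n)) (hS : IsSCC V S)
    (w : ℚ × ℚ) (hw : w ≠ 0)
    (hnopos : ∀ x : ℚ × ℚ, 0 < x.1 → 0 < x.2 → ¬ (0 ≤ w.1 * x.1 + w.2 * x.2))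
    (hcycles : ∀ γ : List (Transition n), IsCycle V γ → WithinS S γ →
      0 ≤ w.1 * ((effect γ).1 : ℚ) + w.2 * ((effect γ).2 : ℚ))
    (hnosimple : ¬ ∃ γ : List (Transition n), IsSimpleCycle V γ ∧ WithinS S γ ∧
      (Vert (effect γ) ∨ Horiz (effect γ)))
    (π : List (Transition n)) (q : Fin n) (u : Vec2)
    (hrun : IsRun V π q u)
    (hin : ∀ i ≤ π.length, stateAt π q i ∈ S) :
    vnorm (vecAt π u π.length) ≤
      (vnorm u + (n - 1) * vassNorm V) * (1 + n * vassNorm V) := by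
  have hwithin := hrun.1.withinS_of_forall_stateAt_mem hrun.2.1 hin
  exact scc_halfplane_bounded_general hnopos (fun γ hγ => hcycles γ hγ.1) hnosimple hrun.1 hwithin
    (hrun.2.2 π.length le_rfl)
end
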